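/- For every ε > 0 and integers d, r ≥ 1: every (ε,r)-uniform finite simple graph G of maximum degree at most d is (d²ε/2, N^d_{2r})-hyperfinite; that is, there exists a set W of edges of G with |W| ≤ (d²ε/2)·|V(G)| such that every connected component of the graph obtained from G by deleting the edges in W has at most N^d_{2r} vertices. In other words, A^d_{ε,r} ⊆ H^d_{d²ε/2, N^d_{2r}}. -/

import Mathlib

/-!
Fix a witness `f` of uniformity. For a vertex `z` and a level `t ≥ 0`, the superlevel set
`{x | t < f x z}` lies in the ball of radius `r` around `z`. Within any vertex set `S`, the sizes
of these sets, summed over `z` and integrated over `t`, give `∑ x ∈ S, ‖f x‖₁ = |S|`; the numbers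
of edges joining them to the rest of `S` give the sum over edges inside `S` of `‖f x - f y‖₁`
(a layer-cake computation), which is less than `(dε/2)|S|`. So some superlevel set `L` is nonempty
and has at most `(dε/2)|L|` boundary edges in `S` (`exists_small_boundary`).

Cutting off such sets repeatedly until no vertex is left (`exists_cut`) deletes at most
`(dε/2)|V|` edges and leaves only components contained in balls of radius `r`. Both bounds are
stronger than required, since `d ≤ d²` and `r ≤ 2r`.
-/

open scoped Classical symmDiff

noncomputable section

/-- The closed ball of radius `r` around `x` in the graph `G`. -/
def ballSet {V : Type*} (G : SimpleGraph V) (r : ℕ) (x : V) : Set V :=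
  {z | G.edist x z ≤ r}

lemma self_mem_ballSet {V : Type*} (G : SimpleGraph V) (r : ℕ) (x : V) :
    x ∈ ballSet G r x := by
  simp [ballSet]

/-- `G` has maximum degree at most `d`. -/
def DegLE {V : Type*} (G : SimpleGraph V) (d : ℕ) : Prop :=
  ∀ v, (G.neighborSet v).ncard ≤ d

/-- `N^d_r`: the maximum number of vertices of a ball of radius `r`
in a graph of maximum degree at most `d`. -/
def ballBound (d r : ℕ) : ℕ :=
  sSup {n | ∃ (W : Type) (_ : Fintype W) (G : SimpleGraph W) (x : W),
    DegLE G d ∧ n = (ballSet G r x).ncard}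

/-- A `Q`-verifier: a predicate on rooted `Q`-labelled finite graphs. -/
def Verifier (Q : Type) : Type 1 :=
  ∀ (B : Type) [Fintype B], SimpleGraph B → B → (B → Q) → Prop

/-- Invariance of a verifier under root- and label-preserving isomorphisms. -/
def Verifier.Inv {Q : Type} (𝒱 : Verifier Q) : Prop :=
  ∀ (B B' : Type) [Fintype B] [Fintype B'] (G : SimpleGraph B) (G' : SimpleGraph B')
    (φ : G ≃g G') (b : B) (ℓ' : B' → Q),
    𝒱 B G b (ℓ' ∘ φ) ↔ 𝒱 B' G' (φ b) ℓ'

/-- The verifier `𝒱` of local horizon `r` accepts the proof `T` on `G`: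
for every vertex `x`, the `r`-neighbourhood of `x`, rooted at `x` and labelled by
(the restriction of) `T`, satisfies `𝒱`. -/
def Accepts {Q V : Type} [Fintype V] (𝒱 : Verifier Q) (r : ℕ)
    (G : SimpleGraph V) (T : V → Q) : Prop :=
  ∀ x : V, 𝒱 ↥(ballSet G r x) (G.induce (ballSet G r x))
    ⟨x, self_mem_ballSet G r x⟩ (fun z => T z.1)

/-- `G` is `(ε,K)`-hyperfinite. -/
def IsHyperfinite {V : Type*} [Fintype V] (G : SimpleGraph V) (ε : ℝ) (K : ℕ) : Prop :=
  ∃ W ⊆ G.edgeSet, (W.ncard : ℝ) ≤ ε * (Nat.card V : ℝ) ∧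
    ∀ v : V, (((G.deleteEdges W).connectedComponentMk v).supp).ncard ≤ K

/-- `G` is `(ε,r)`-uniform. -/
def IsUniform {V : Type*} [Fintype V] (G : SimpleGraph V) (ε : ℝ) (r : ℕ) : Prop :=
  ∃ f : V → V → ℝ,
    (∀ x z, 0 ≤ f x z) ∧
    (∀ x, ∑ z, f x z = 1) ∧
    (∀ x y, G.Adj x y → ∑ z, |f x z - f y z| < ε) ∧
    (∀ x z, (r : ℕ∞) < G.edist x z → f x z = 0)

/-- A class of finite simple graphs. -/
def GraphClass : Type 1 := ∀ (V : Type) [Fintype V], SimpleGraph V → Prop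

/-- `P` is monotone: closed under taking subgraphs. -/
def GraphClass.Mono (P : GraphClass) : Prop :=
  ∀ (V W : Type) [Fintype V] [Fintype W] (G : SimpleGraph V) (H : SimpleGraph W)
    (f : W ↪ V), (∀ a b, H.Adj a b → G.Adj (f a) (f b)) → P V G → P W H

/-- `P` is closed under taking disjoint unions. -/
def GraphClass.ClosedUnderDisjUnion (P : GraphClass) : Prop :=
  ∀ (V W : Type) [Fintype V] [Fintype W] (G : SimpleGraph V) (H : SimpleGraph W),
    P V G → P W H → P (V ⊕ W) (G ⊕g H)

/-- `P` is hyperfinite. -/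
def GraphClass.Hyperfinite (P : GraphClass) : Prop :=
  ∀ ε : ℝ, 0 < ε → ∃ K : ℕ, 1 ≤ K ∧
    ∀ (V : Type) [Fintype V] (G : SimpleGraph V), P V G → IsHyperfinite G ε K

/-- The inner vertex boundary of `L` inside the subgraph of `G` induced on `S`:
vertices of `L` having a neighbour in `S \ L`. -/
def innerBoundary {V : Type*} (G : SimpleGraph V) (S L : Set V) : Set V :=
  {x ∈ L | ∃ y ∈ S \ L, G.Adj x y}

/-- The edge boundary of `L` in `F`: edges of `F` with exactly one endpoint in `L`. -/
def edgeBoundary {V : Type*} (F : SimpleGraph V) (L : Set V) : Set (Sym2 V) :=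
  {e ∈ F.edgeSet | ∃ x ∈ L, ∃ y ∉ L, e = s(x, y)}

/-- `Y` is a `K`-separator of `G`. -/
def IsSeparator {V : Type*} (G : SimpleGraph V) (K : ℕ) (Y : Set V) : Prop :=
  ∀ v : ↥(Yᶜ), ((((G.induce Yᶜ)).connectedComponentMk v).supp).ncard ≤ K


lemma ballSet_succ_subset {V : Type*} (G : SimpleGraph V) (r : ℕ) (x : V) :
    ballSet G (r + 1) x ⊆ ⋃ y ∈ ballSet G r x, insert y (G.neighborSet y) := by
  intro z hz
  have hz' : G.edist z x ≤ ((r + 1 : ℕ) : ℕ∞) := by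
    rw [SimpleGraph.edist_comm]; exact hz
  obtain ⟨p, hp⟩ := SimpleGraph.exists_walk_of_edist_ne_top
    (ne_top_of_le_ne_top (ENat.natCast_ne_top _) hz')
  rw [← hp] at hz'
  have hlen : p.length ≤ r + 1 := by exact_mod_cast hz'
  simp only [Set.mem_iUnion]
  cases p with
  | nil => exact ⟨_, self_mem_ballSet G r _, Set.mem_insert _ _⟩
  | @cons _ y _ h q =>
    refine ⟨y, ?_, Set.mem_insert_of_mem _ h.symm⟩
    rw [SimpleGraph.Walk.length_cons] at hlen
    have hq : q.length ≤ r := by omega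
    change G.edist x y ≤ r
    rw [SimpleGraph.edist_comm]
    exact q.edist_le.trans (by exact_mod_cast hq)

lemma ncard_ballSet_le {V : Type*} [Fintype V] (G : SimpleGraph V) (d : ℕ) (hG : DegLE G d)
    (r : ℕ) (x : V) : (ballSet G r x).ncard ≤ (d + 1) ^ r := by
  induction r with
  | zero =>
    have : ballSet G 0 x ⊆ {x} := by
      intro z hz
      have hz' : G.edist x z ≤ ((0 : ℕ) : ℕ∞) := hz
      rw [Nat.cast_zero, nonpos_iff_eq_zero, SimpleGraph.edist_eq_zero_iff] at hz'
      exact hz'.symm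
    simpa using Set.ncard_le_ncard this
  | succ r ih =>
    have h1 : (⋃ y ∈ ballSet G r x, insert y (G.neighborSet y)).ncard
        ≤ (ballSet G r x).toFinset.card * (d + 1) := by
      have h2 : (⋃ y ∈ ballSet G r x, insert y (G.neighborSet y))
          = ((ballSet G r x).toFinset.biUnion
              fun y => (insert y (G.neighborSet y)).toFinset : Finset V) := by
        ext; simp
      rw [h2, Set.ncard_coe_finset]
      refine Finset.card_biUnion_le_card_mul _ _ _ fun y _ => ?_
      rw [← Set.ncard_eq_toFinset_card']
      exact (Set.ncard_insert_le _ _).trans (Nat.add_le_add_right (hG y) 1)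
    rw [← Set.ncard_eq_toFinset_card'] at h1
    calc _ ≤ _ := Set.ncard_le_ncard (ballSet_succ_subset G r x)
      _ ≤ _ := h1
      _ ≤ (d + 1) ^ r * (d + 1) := Nat.mul_le_mul_right _ ih
      _ = _ := (pow_succ _ _).symm

/-- The supremum defining `ballBound` is over a bounded set, so it does bound every ball. -/
lemma ncard_ballSet_le_ballBound {V : Type} [Fintype V] (G : SimpleGraph V) (d : ℕ)
    (hG : DegLE G d) (r : ℕ) (x : V) : (ballSet G r x).ncard ≤ ballBound d r := by
  refine le_csSup ⟨(d + 1) ^ r, ?_⟩ ⟨V, inferInstance, G, x, hG, rfl⟩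
  rintro n ⟨W, _, H, w, hH, rfl⟩
  exact ncard_ballSet_le H d hH r w

/-- The edges of `G` between `L` and `S \ L`, oriented out of `L`. -/
def outPairs {V : Type*} [Fintype V] (G : SimpleGraph V) (S L : Finset V) : Finset (V × V) :=
  Finset.univ.filter fun p => G.Adj p.1 p.2 ∧ p.1 ∈ L ∧ p.2 ∈ S ∧ p.2 ∉ L

/-- For two probability vectors, the positive part of the difference carries half of the
`ℓ¹`-norm. -/
lemma sum_posPart_sub {V : Type*} [Fintype V] (a b : V → ℝ) (ha : ∑ z, a z = 1)
    (hb : ∑ z, b z = 1) : ∑ z, max (a z - b z) 0 = (∑ z, |a z - b z|) / 2 := by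
  have h : ∀ z, max (a z - b z) 0 = (a z - b z + |a z - b z|) / 2 := fun z => by
    rcases le_total 0 (a z - b z) with h | h
    · rw [max_eq_left h, abs_of_nonneg h]; ring
    · rw [max_eq_right h, abs_of_nonpos h]; ring
  simp only [h]
  rw [← Finset.sum_div, Finset.sum_add_distrib, Finset.sum_sub_distrib, ha, hb]
  ring

/-- Inside any nonempty `S`, some superlevel set of some coordinate `x ↦ f x z` has small edge
boundary relative to `S`: averaged over `z` and over the level `t`, its size is `|S|`, whereas its
boundary is less than `(dε/2)|S|`. -/
lemma exists_small_boundary {V : Type*} [Fintype V] (G : SimpleGraph V) (ε : ℝ) (hε : 0 < ε)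
    (d : ℕ) (hd : 1 ≤ d) (hG : DegLE G d) (f : V → V → ℝ) (h0 : ∀ x z, 0 ≤ f x z)
    (h1 : ∀ x, ∑ z, f x z = 1) (h2 : ∀ x y, G.Adj x y → ∑ z, |f x z - f y z| < ε)
    (S : Finset V) (hS : S.Nonempty) :
    ∃ z : V, ∃ L ⊆ S, L.Nonempty ∧ (∀ x ∈ L, 0 < f x z) ∧
      ((outPairs G S L).card : ℝ) ≤ d * ε / 2 * L.card := by
  let L : V → ℝ → Finset V := fun z t => S.filter fun x => t ∈ Set.Ico 0 (f x z)
  let E : Finset (V × V) :=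
    Finset.univ.filter fun p => G.Adj p.1 p.2 ∧ p.1 ∈ S ∧ p.2 ∈ S
  have hcardL : ∀ z t, ((L z t).card : ℝ)
      = ∑ x ∈ S, (Set.Ico 0 (f x z)).indicator (fun _ => (1 : ℝ)) t := fun z t => by
    simp only [L, Finset.card_filter, Set.indicator_apply]
    push_cast
    rfl
  -- A level `t` separates `x` from `y` exactly when `f y z ≤ t < f x z`.
  have hcardB : ∀ z t, ((outPairs G S (L z t)).card : ℝ) ≤
      ∑ p ∈ E, (Set.Ico (f p.2 z) (f p.1 z)).indicator (fun _ => (1 : ℝ)) t := fun z t => by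
    have : outPairs G S (L z t) ⊆ E.filter fun p => t ∈ Set.Ico (f p.2 z) (f p.1 z) := by
      intro p hp
      simp only [outPairs, L, E, Finset.mem_filter, Finset.mem_univ, true_and, Set.mem_Ico]
        at hp ⊢
      obtain ⟨hadj, ⟨hxS, ht0, htx⟩, hyS, hy⟩ := hp
      exact ⟨⟨hadj, hxS, hyS⟩, not_lt.1 fun hlt => hy ⟨hyS, ht0, hlt⟩, htx⟩
    calc ((outPairs G S (L z t)).card : ℝ)
        ≤ ((E.filter fun p => t ∈ Set.Ico (f p.2 z) (f p.1 z)).card : ℝ) := by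
          exact_mod_cast Finset.card_le_card this
      _ = _ := by
          simp only [Finset.card_filter, Set.indicator_apply]
          push_cast
          rfl
  have hint : ∀ a b : ℝ, MeasureTheory.Integrable
      ((Set.Ico a b).indicator fun _ => (1 : ℝ)) := fun a b =>
    (MeasureTheory.integrable_indicator_iff measurableSet_Ico).2
      (MeasureTheory.integrableOn_const (by simp) (by simp))
  have hval : ∀ a b : ℝ, ∫ t, (Set.Ico a b).indicator (fun _ => (1 : ℝ)) t = max (b - a) 0 :=
    fun a b => by
      rw [MeasureTheory.integral_indicator measurableSet_Ico]
      simp [MeasureTheory.measureReal_def, ENNReal.toReal_ofReal']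
  have hEcard : (E.card : ℝ) ≤ d * S.card := by
    have : E ⊆ (S.sigma fun x => (G.neighborSet x).toFinset).image fun p => (p.1, p.2) := by
      rintro ⟨x, y⟩ hp
      simp only [E, Finset.mem_filter, Finset.mem_univ, true_and] at hp
      simp only [Finset.mem_image, Finset.mem_sigma, Set.mem_toFinset]
      exact ⟨⟨x, y⟩, ⟨hp.2.1, hp.1⟩, rfl⟩
    have h3 : E.card ≤ S.card * d := by
      refine (Finset.card_le_card this).trans (Finset.card_image_le.trans ?_)
      rw [Finset.card_sigma]
      refine (Finset.sum_le_card_nsmul _ _ d fun x _ => ?_).trans (by simp)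
      rw [← Set.ncard_eq_toFinset_card']
      exact hG x
    rw [mul_comm]
    exact_mod_cast h3
  have hSpos : (0 : ℝ) < S.card := by exact_mod_cast hS.card_pos
  have hdpos : (0 : ℝ) < d := by exact_mod_cast hd
  have hB : ∑ p ∈ E, ∑ z, max (f p.1 z - f p.2 z) 0 < d * ε / 2 * S.card := by
    have hp : ∀ p ∈ E, ∑ z, max (f p.1 z - f p.2 z) 0 < ε / 2 := fun p hp => by
      rw [sum_posPart_sub _ _ (h1 _) (h1 _)]
      have := h2 p.1 p.2 (Finset.mem_filter.1 hp).2.1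
      linarith
    rcases E.eq_empty_or_nonempty with hE | hE
    · rw [hE, Finset.sum_empty]; positivity
    · calc _ < ∑ p ∈ E, ε / 2 := Finset.sum_lt_sum_of_nonempty hE hp
        _ = E.card * (ε / 2) := by simp
        _ ≤ d * S.card * (ε / 2) := by gcongr
        _ = _ := by ring
  let g : ℝ → ℝ := fun t => ∑ z,
    (d * ε / 2 * ∑ x ∈ S, (Set.Ico 0 (f x z)).indicator (fun _ => (1 : ℝ)) t
      - ∑ p ∈ E, (Set.Ico (f p.2 z) (f p.1 z)).indicator (fun _ => (1 : ℝ)) t)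
  have hg : 0 < ∫ t, g t := by
    have i1 : ∀ z, MeasureTheory.Integrable fun t => d * ε / 2 *
        ∑ x ∈ S, (Set.Ico 0 (f x z)).indicator (fun _ => (1 : ℝ)) t := fun z =>
      (MeasureTheory.integrable_finsetSum _ fun x _ => hint _ _).const_mul _
    have i2 : ∀ z, MeasureTheory.Integrable fun t =>
        ∑ p ∈ E, (Set.Ico (f p.2 z) (f p.1 z)).indicator (fun _ => (1 : ℝ)) t := fun z =>
      MeasureTheory.integrable_finsetSum _ fun x _ => hint _ _
    have : ∫ t, g t = d * ε / 2 * S.card - ∑ p ∈ E, ∑ z, max (f p.1 z - f p.2 z) 0 := by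
      simp only [g]
      rw [MeasureTheory.integral_finsetSum _ fun z _ => by exact (i1 z).sub (i2 z)]
      have h3 : ∀ z, ∫ t, (d * ε / 2 *
            ∑ x ∈ S, (Set.Ico 0 (f x z)).indicator (fun _ => (1 : ℝ)) t
          - ∑ p ∈ E, (Set.Ico (f p.2 z) (f p.1 z)).indicator (fun _ => (1 : ℝ)) t)
          = d * ε / 2 * ∑ x ∈ S, f x z - ∑ p ∈ E, max (f p.1 z - f p.2 z) 0 := fun z => by
        rw [MeasureTheory.integral_sub (i1 z) (i2 z), MeasureTheory.integral_const_mul,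
          MeasureTheory.integral_finsetSum _ fun x _ => hint _ _,
          MeasureTheory.integral_finsetSum _ fun x _ => hint _ _]
        simp only [hval, sub_zero, max_eq_left (h0 _ _)]
      simp only [h3]
      rw [Finset.sum_sub_distrib, ← Finset.mul_sum, Finset.sum_comm (s := Finset.univ) (t := S),
        Finset.sum_comm (s := Finset.univ) (t := E)]
      simp [h1]
    rw [this]
    linarith
  obtain ⟨t, ht⟩ : ∃ t, 0 < g t := by
    by_contra! hcon
    exact absurd (MeasureTheory.integral_nonpos hcon) (not_le.2 hg)
  obtain ⟨z, -, hz⟩ := Finset.exists_lt_of_sum_lt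
    (show ∑ _z : V, (0 : ℝ) < ∑ z, _ from Finset.sum_const_zero.trans_lt ht)
  rw [← hcardL] at hz
  have hlt : ((outPairs G S (L z t)).card : ℝ) < d * ε / 2 * (L z t).card :=
    (hcardB z t).trans_lt (by linarith)
  refine ⟨z, L z t, Finset.filter_subset _ _, ?_, fun x hx => ?_, hlt.le⟩
  · rw [Finset.nonempty_iff_ne_empty]
    intro he
    rw [he] at hlt
    simp only [Finset.card_empty, Nat.cast_zero, mul_zero] at hlt
    exact absurd hlt (not_lt.2 (Nat.cast_nonneg _))
  · obtain ⟨-, ht0, htx⟩ := Finset.mem_filter.1 hx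
    exact ht0.trans_lt htx

/-- If every nonempty `S` contains a nonempty piece of at most `K` vertices with at most `c`
boundary edges per vertex, then cutting off such pieces one at a time partitions `S`. The
partition is recorded as a colouring, constant along the edges that are not cut. -/
lemma exists_cut {V : Type*} [Fintype V] (G : SimpleGraph V) (c : ℝ) (K : ℕ)
    (h : ∀ S : Finset V, S.Nonempty → ∃ L ⊆ S, L.Nonempty ∧ L.card ≤ K ∧
      ((outPairs G S L).card : ℝ) ≤ c * L.card) (S : Finset V) :
    ∃ W : Finset (Sym2 V), (W : Set (Sym2 V)) ⊆ G.edgeSet ∧ (W.card : ℝ) ≤ c * S.card ∧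
      ∃ col : V → ℕ, (∀ x ∈ S, ∀ y ∈ S, G.Adj x y → s(x, y) ∉ W → col x = col y) ∧
        ∀ n, (S.filter fun x => col x = n).card ≤ K := by
  induction S using Finset.strongInduction with
  | H S ih =>
    rcases S.eq_empty_or_nonempty with rfl | hS
    · exact ⟨∅, by simp, by simp, fun _ => 0, by simp, by simp⟩
    obtain ⟨L, hLS, hL, hLK, hLc⟩ := h S hS
    obtain ⟨W, hWG, hWc, col, hcol, hK⟩ := ih (S \ L) (Finset.sdiff_ssubset hLS hL)
    refine ⟨W ∪ (outPairs G S L).image fun p => s(p.1, p.2), ?_, ?_,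
      fun x => if x ∈ L then 0 else col x + 1, ?_, ?_⟩
    · intro e he
      rw [Finset.mem_coe, Finset.mem_union] at he
      rcases he with he | he
      · exact hWG he
      · obtain ⟨p, hp, rfl⟩ := Finset.mem_image.1 he
        exact (Finset.mem_filter.1 hp).2.1
    · have e1 : ((W ∪ (outPairs G S L).image fun p => s(p.1, p.2)).card : ℝ)
          ≤ W.card + (outPairs G S L).card := by
        exact_mod_cast (Finset.card_union_le _ _).trans
          (Nat.add_le_add_left Finset.card_image_le _)
      have e2 : ((S \ L).card : ℝ) + L.card = S.card := by
        exact_mod_cast Finset.card_sdiff_add_card_eq_card hLS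
      rw [← e2, mul_add]
      linarith
    · intro x hx y hy hadj hW
      simp only [Finset.mem_union, Finset.mem_image, not_or, not_exists, not_and] at hW
      have hout : ∀ p : V × V, G.Adj p.1 p.2 → p.1 ∈ L → p.2 ∈ S → p.2 ∉ L →
          s(p.1, p.2) ≠ s(x, y) := fun p a b c d =>
        hW.2 p (Finset.mem_filter.2 ⟨Finset.mem_univ _, a, b, c, d⟩)
      by_cases hxL : x ∈ L <;> by_cases hyL : y ∈ L
      · simp [hxL, hyL]
      · exact absurd rfl (hout (x, y) hadj hxL hy hyL)
      · exact absurd Sym2.eq_swap (hout (y, x) hadj.symm hyL hx hxL)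
      · simp only [hxL, hyL, if_false, Nat.add_right_cancel_iff]
        exact hcol x (Finset.mem_sdiff.2 ⟨hx, hxL⟩) y (Finset.mem_sdiff.2 ⟨hy, hyL⟩) hadj hW.1
    · rintro (_ | n)
      · refine (Finset.card_le_card fun x hx => ?_).trans hLK
        by_contra hxL
        simp [hxL] at hx
      · refine (Finset.card_le_card fun x hx => ?_).trans (hK n)
        by_cases hxL : x ∈ L
        · simp [hxL] at hx
        · simpa [hxL] using hx

/-- Property A implies hyperfiniteness: `A^d_{ε,r} ⊆ H^d_{d²ε/2, N^d_{2r}}`. -/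
theorem uniform_implies_hyperfinite (ε : ℝ) (hε : 0 < ε) (d r : ℕ) (hd : 1 ≤ d)
    (hr : 1 ≤ r) (V : Type) [Fintype V] (G : SimpleGraph V) (hG : DegLE G d)
    (hunif : IsUniform G ε r) :
    IsHyperfinite G ((d : ℝ) ^ 2 * ε / 2) (ballBound d (2 * r)) := by
  obtain ⟨f, h0, h1, h2, h3⟩ := hunif
  obtain ⟨W, hWG, hWc, col, hcol, hK⟩ :=
    exists_cut G (d * ε / 2) (ballBound d (2 * r)) (fun S hS => by
      obtain ⟨z, L, hLS, hL, hpos, hc⟩ := exists_small_boundary G ε hε d hd hG f h0 h1 h2 S hS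
      refine ⟨L, hLS, hL, ?_, hc⟩
      have hsub : (L : Set V) ⊆ ballSet G (2 * r) z := fun x hx => by
        have hxz : G.edist x z ≤ r := not_lt.1 fun hlt => (hpos x hx).ne' (h3 x z hlt)
        rw [SimpleGraph.edist_comm] at hxz
        exact hxz.trans (by exact_mod_cast (by omega : r ≤ 2 * r))
      calc L.card = (L : Set V).ncard := (Set.ncard_coe_finset L).symm
        _ ≤ _ := Set.ncard_le_ncard hsub
        _ ≤ _ := ncard_ballSet_le_ballBound G d hG (2 * r) z) Finset.univ
  refine ⟨W, hWG, ?_, fun v => ?_⟩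
  · rw [Set.ncard_coe_finset, Nat.card_eq_fintype_card]
    rw [Finset.card_univ] at hWc
    refine hWc.trans (mul_le_mul_of_nonneg_right ?_ (Nat.cast_nonneg _))
    have hd' : (1 : ℝ) ≤ d := by exact_mod_cast hd
    have : (d : ℝ) ≤ d ^ 2 := by nlinarith
    have := mul_le_mul_of_nonneg_right this hε.le
    linarith
  · have hwalk : ∀ {x y : V}, (G.deleteEdges (W : Set (Sym2 V))).Walk x y → col x = col y := by
      intro x y p
      induction p with
      | nil => rfl
      | cons hadj _ ih =>
        rw [SimpleGraph.deleteEdges_adj] at hadj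
        exact (hcol _ (Finset.mem_univ _) _ (Finset.mem_univ _) hadj.1 hadj.2).trans ih
    have hsub : ((G.deleteEdges (W : Set (Sym2 V))).connectedComponentMk v).supp ⊆
        ((Finset.univ.filter fun x => col x = col v : Finset V) : Set V) := fun x hx => by
      rw [SimpleGraph.ConnectedComponent.mem_supp_iff, SimpleGraph.ConnectedComponent.eq] at hx
      obtain ⟨p⟩ := hx
      simpa using hwalk p
    refine (Set.ncard_le_ncard hsub).trans ?_
    rw [Set.ncard_coe_finset]
    exact hK _

end
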